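/- Let n ≥ 1 and let μ be a Borel probability measure on ℝ^{n×n} with bounded support whose support leaves a proper cone K ⊆ ℝⁿ invariant. Let p ≥ 1 be an integer, suppose Σ_μ is exponentially stable in pth mean (equivalently, ρ_{p,μ} < 1), and let γ ∈ (ρ_{p,μ}, 1). Then there exists a proper cone K_p ⊆ ℝ^{n^p} left invariant by {B^{⊗p} : B ∈ supp μ} and a cone linear absolute norm ‖·‖_g on ℝ^{n^p} with respect to K_p such that V(x) := ‖x^{⊗p}‖_g is a stochastic Lyapunov function for μ of degree p with growth rate γ. -/

import Mathlib

open MeasureTheory Filter Topology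
open scoped ENNReal RealInnerProductSpace

noncomputable section

/-- The space of real `n × n` matrices. -/
abbrev Mat (n : ℕ) := Matrix (Fin n) (Fin n) ℝ

/-- Euclidean space `ℝⁿ`. -/
abbrev EucSp (n : ℕ) := EuclideanSpace ℝ (Fin n)

/-- The (Borel = product) measurable structure on `n × n` real matrices. -/
instance matMeasurableSpace (n : ℕ) : MeasurableSpace (Mat n) :=
  inferInstanceAs (MeasurableSpace (Fin n → Fin n → ℝ))

/-- Lebesgue measure on the space of `n × n` real matrices `≅ ℝ^{n²}`. -/
def matLebesgue (n : ℕ) : Measure (Mat n) :=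
  (inferInstance : MeasureSpace (Fin n → Fin n → ℝ)).volume

/-- The operator norm (maximal singular value) of a real square matrix, induced by the
Euclidean norm. -/
def opNorm {m : ℕ} (A : Matrix (Fin m) (Fin m) ℝ) : ℝ :=
  ‖LinearMap.toContinuousLinearMap (Matrix.toEuclideanLin A)‖

/-- The product `A_k ⋯ A_1` of the matrices `f 0 = A_1, …, f (k-1) = A_k` (decreasing order of
indices). -/
def prodRev {m k : ℕ} (f : Fin k → Matrix (Fin m) (Fin m) ℝ) : Matrix (Fin m) (Fin m) ℝ :=
  ((List.ofFn f).reverse).prod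

/-- The joint spectral radius of a set of matrices:
`ρ̂(M) = limsup_{k→∞} sup_{A₁,…,A_k ∈ M} ‖A_k ⋯ A₁‖^(1/k)`. -/
def jsr {m : ℕ} (M : Set (Matrix (Fin m) (Fin m) ℝ)) : ℝ :=
  limsup (fun k : ℕ =>
    sSup {x : ℝ | ∃ f : Fin k → Matrix (Fin m) (Fin m) ℝ,
      (∀ i, f i ∈ M) ∧ x = opNorm (prodRev f)} ^ ((1 : ℝ) / k)) atTop

/-- `E[‖A_k ⋯ A₁‖^p]` where `A₁, …, A_k` are i.i.d. with law `μ`. -/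
def kExpNorm {m : ℕ} (μ : Measure (Mat m)) (p k : ℕ) : ℝ :=
  ∫ f : Fin k → Mat m, opNorm (prodRev f) ^ p ∂(Measure.pi fun _ => μ)

/-- The `L^p`-norm joint spectral radius (`p`-radius) of a probability distribution `μ`:
`ρ_{p,μ} = lim_{k→∞} (E[‖A_k ⋯ A₁‖^p])^{1/(pk)}`; since this limit exists for distributions
with bounded support, it coincides with the `limsup` used here. -/
def pRadius {m : ℕ} (μ : Measure (Mat m)) (p : ℕ) : ℝ :=
  limsup (fun k : ℕ => kExpNorm μ p k ^ (1 / (p * k : ℝ))) atTop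

/-- The (topological) support of a measure on matrices. -/
def msupport {m : ℕ} (μ : Measure (Mat m)) : Set (Mat m) :=
  {A | ∀ ε : ℝ, 0 < ε → μ {B | opNorm (B - A) < ε} ≠ 0}

/-- `μ` has bounded support. -/
def HasBoundedSupport {m : ℕ} (μ : Measure (Mat m)) : Prop :=
  ∃ C : ℝ, ∀ A ∈ msupport μ, opNorm A ≤ C

/-- A proper cone of `ℝⁿ`: a closed convex pointed cone with nonempty interior. -/
structure IsProperCone {m : ℕ} (K : Set (EucSp m)) : Prop where
  isClosed : IsClosed K
  convex : Convex ℝ K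
  smul_mem : ∀ c : ℝ, 0 ≤ c → ∀ x ∈ K, c • x ∈ K
  pointed : ∀ x ∈ K, -x ∈ K → x = 0
  solid : (interior K).Nonempty

/-- A matrix `A` leaves a cone `K` invariant: `A K ⊆ K`. -/
def LeavesInv {m : ℕ} (A : Matrix (Fin m) (Fin m) ℝ) (K : Set (EucSp m)) : Prop :=
  ∀ x ∈ K, Matrix.toEuclideanLin A x ∈ K

/-- A set of matrices leaves a cone invariant if each of its members does. -/
def SetLeavesInv {m : ℕ} (S : Set (Matrix (Fin m) (Fin m) ℝ)) (K : Set (EucSp m)) : Prop :=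
  ∀ A ∈ S, LeavesInv A K

/-- `π(K)`: the set of matrices leaving the cone `K` invariant. -/
def piCone {m : ℕ} (K : Set (EucSp m)) : Set (Mat m) := {A | LeavesInv A K}

/-- Distance (valued in `ℝ≥0∞`, with `d(A, ∅) = ∞`) from a matrix to a set of matrices, in the
operator norm. -/
def edistSet {m : ℕ} (A : Mat m) (S : Set (Mat m)) : ℝ≥0∞ :=
  ⨅ B ∈ S, ENNReal.ofReal (opNorm (A - B))

/-- Hausdorff distance between two sets of matrices (operator norm, valued in `ℝ≥0∞`). -/
def hausdorffDistE {m : ℕ} (S T : Set (Mat m)) : ℝ≥0∞ :=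
  max (⨆ A ∈ S, edistSet A T) (⨆ B ∈ T, edistSet B S)

/-- `S_M = {A : A − M leaves K invariant}`, i.e. `{A : A ≥^K M}`. -/
def matSSet {m : ℕ} (K : Set (EucSp m)) (M : Mat m) : Set (Mat m) :=
  {A | LeavesInv (A - M) K}

/-- `π_r = {M ∈ π(K) : d(M, ∂π(K)) ≥ r}`. -/
def piConeR {m : ℕ} (K : Set (EucSp m)) (r : ℝ) : Set (Mat m) :=
  {M | M ∈ piCone K ∧ ENNReal.ofReal r ≤ edistSet M (frontier (piCone K))}

/-- `M_r = (π_r ∩ supp μ_c) ∪ supp μ_s`. -/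
def MrSet {m : ℕ} (K : Set (EucSp m)) (μc μs : Measure (Mat m)) (r : ℝ) : Set (Mat m) :=
  (piConeR K r ∩ msupport μc) ∪ msupport μs

/-- The measure `ν` is zero or a finite linear combination (with positive coefficients) of
Dirac measures. -/
def IsFiniteDiracComb {m : ℕ} (ν : Measure (Mat m)) : Prop :=
  ν = 0 ∨ ∃ (N : ℕ) (w : Fin N → ℝ) (Ms : Fin N → Mat m),
    (∀ i, 0 < w i) ∧ ν = ∑ i, ENNReal.ofReal (w i) • Measure.dirac (Ms i)

/-- The `p`-th Kronecker power of a square matrix (with `A^{⊗0} = 1`, `A^{⊗(p+1)} = A^{⊗p} ⊗ A`). -/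
def kronPow {m : ℕ} (A : Matrix (Fin m) (Fin m) ℝ) :
    (p : ℕ) → Matrix (Fin (m ^ p)) (Fin (m ^ p)) ℝ
  | 0 => 1
  | p + 1 =>
    Matrix.reindex (finProdFinEquiv.trans (finCongr (pow_succ m p).symm))
      (finProdFinEquiv.trans (finCongr (pow_succ m p).symm))
      (Matrix.kroneckerMap (· * ·) (kronPow A p) A)

/-- The `q`-th Kronecker power of a vector. -/
def vecKronPow {m : ℕ} (x : EucSp m) : (q : ℕ) → EucSp (m ^ q)
  | 0 => WithLp.toLp 2 fun _ => 1
  | q + 1 => WithLp.toLp 2 fun i =>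
      vecKronPow x q (finProdFinEquiv.symm (finCongr (pow_succ m q) i)).1 *
        x (finProdFinEquiv.symm (finCongr (pow_succ m q) i)).2

/-- The spectral radius of a real square matrix: the largest modulus of a complex eigenvalue. -/
def specRad {m : ℕ} (A : Matrix (Fin m) (Fin m) ℝ) : ℝ :=
  sSup ((norm : ℂ → ℝ) '' spectrum ℂ (A.map Complex.ofReal))

/-- The entrywise expectation `E[A^{⊗p}]` of the `p`-th Kronecker power under `μ`. -/
def kronExp {m : ℕ} (μ : Measure (Mat m)) (p : ℕ) :
    Matrix (Fin (m ^ p)) (Fin (m ^ p)) ℝ :=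
  Matrix.of fun i j => ∫ A, kronPow A p i j ∂μ

/-- `V` is a stochastic Lyapunov function for `μ` of degree `p` with growth rate `γ`. -/
def IsStochLyap {m : ℕ} (μ : Measure (Mat m)) (p : ℕ) (γ : ℝ) (V : EucSp m → ℝ) : Prop :=
  (∃ C₁ : ℝ, 0 < C₁ ∧ ∃ C₂ : ℝ, 0 < C₂ ∧
    ∀ x : EucSp m, C₁ * ‖x‖ ^ p ≤ V x ∧ V x ≤ C₂ * ‖x‖ ^ p) ∧
  ∀ x : EucSp m, (∫ A, V (Matrix.toEuclideanLin A x) ∂μ) ≤ γ ^ p * V x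

/-- `ν` is a norm on `ℝ^m`. -/
def IsNormFn {m : ℕ} (ν : EucSp m → ℝ) : Prop :=
  (∀ x, 0 ≤ ν x) ∧ (∀ x, ν x = 0 ↔ x = 0) ∧
  (∀ (a : ℝ) (x : EucSp m), ν (a • x) = |a| * ν x) ∧
  (∀ x y : EucSp m, ν (x + y) ≤ ν x + ν y)

/-- `ν` is cone absolute with respect to `K`:
`ν x = inf {ν (v + w) : v, w ∈ K, x = v − w}`. -/
def IsConeAbsolute {m : ℕ} (K : Set (EucSp m)) (ν : EucSp m → ℝ) : Prop :=
  ∀ x : EucSp m, ν x = sInf {r : ℝ | ∃ v ∈ K, ∃ w ∈ K, x = v - w ∧ r = ν (v + w)}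

/-- The dual cone `K* = {f : fᵀx ≥ 0 for all x ∈ K}`. -/
def dualConeSet {m : ℕ} (K : Set (EucSp m)) : Set (EucSp m) :=
  {f | ∀ x ∈ K, 0 ≤ ⟪f, x⟫}

/-- `ν` is cone linear with respect to `K`: `ν = ⟪f, ·⟫` on `K` for some `f ∈ K*`. -/
def IsConeLinear {m : ℕ} (K : Set (EucSp m)) (ν : EucSp m → ℝ) : Prop :=
  ∃ f ∈ dualConeSet K, ∀ x ∈ K, ν x = ⟪f, x⟫

/-- The matrix norm induced by a norm `ν` on `ℝ^m`. -/
def inducedNormFn {m : ℕ} (ν : EucSp m → ℝ) (A : Matrix (Fin m) (Fin m) ℝ) : ℝ :=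
  sSup {c : ℝ | ∃ x : EucSp m, x ≠ 0 ∧ c = ν (Matrix.toEuclideanLin A x) / ν x}

section Cone

variable {m : ℕ} {C : Set (EucSp m)}

lemma IsProperCone.nonempty (hC : IsProperCone C) : C.Nonempty :=
  hC.solid.mono interior_subset

lemma IsProperCone.zero_mem (hC : IsProperCone C) : (0 : EucSp m) ∈ C := by
  obtain ⟨x, hx⟩ := hC.nonempty
  simpa using hC.smul_mem 0 le_rfl x hx

lemma IsProperCone.add_mem (hC : IsProperCone C) {x y : EucSp m} (hx : x ∈ C) (hy : y ∈ C) :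
    x + y ∈ C := by
  have h := hC.smul_mem 2 zero_le_two _
    (hC.convex hx hy (a := 1 / 2) (b := 1 / 2) (by norm_num) (by norm_num) (by norm_num))
  simpa [smul_add, smul_smul] using h

/-- A proper cone, as a bundled closed convex cone. -/
def IsProperCone.toProperCone (hC : IsProperCone C) : ProperCone ℝ (EucSp m) where
  carrier := C
  add_mem' := hC.add_mem
  zero_mem' := hC.zero_mem
  smul_mem' c x hx := hC.smul_mem c c.2 x hx
  isClosed' := hC.isClosed

/-- A proper cone contains its bidual. -/
lemma IsProperCone.mem_of_dual (hC : IsProperCone C) {x : EucSp m}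
    (hx : ∀ f ∈ dualConeSet C, 0 ≤ ⟪f, x⟫) : x ∈ C := by
  by_contra h
  obtain ⟨f, hf, hfx⟩ := hC.toProperCone.hyperplane_separation' (x₀ := x) h
  refine (hx f fun y hy => ?_).not_gt (by rwa [real_inner_comm])
  rw [real_inner_comm]
  exact hf y hy

lemma IsProperCone.span_dual (hC : IsProperCone C) :
    Submodule.span ℝ (dualConeSet C) = ⊤ := by
  rw [← Submodule.orthogonal_eq_bot_iff, Submodule.eq_bot_iff]
  intro x hx
  have h0 : ∀ f ∈ dualConeSet C, ⟪f, x⟫ = 0 := fun f hf =>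
    (Submodule.mem_orthogonal _ _).1 hx f (Submodule.subset_span hf)
  refine hC.pointed x (hC.mem_of_dual fun f hf => (h0 f hf).ge)
    (hC.mem_of_dual fun f hf => ?_)
  simp [inner_neg_right, h0 f hf]

/-- Elements of the dual cone are uniformly positive at interior points. -/
lemma exists_le_inner_of_mem_interior {x : EucSp m} (hx : x ∈ interior C) :
    ∃ c : ℝ, 0 < c ∧ ∀ f ∈ dualConeSet C, c * ‖f‖ ≤ ⟪f, x⟫ := by
  obtain ⟨r, hr, hball⟩ := Metric.isOpen_iff.1 isOpen_interior x hx
  refine ⟨r / 2, by positivity, fun f hf => ?_⟩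
  rcases eq_or_ne f 0 with rfl | hf0
  · simp
  have hn : 0 < ‖f‖ := norm_pos_iff.2 hf0
  have hmem : x - (r / 2 / ‖f‖) • f ∈ C := by
    refine interior_subset (hball ?_)
    rw [Metric.mem_ball, dist_eq_norm, sub_sub_cancel_left, norm_neg, norm_smul,
      Real.norm_of_nonneg (by positivity), div_mul_cancel₀ _ hn.ne']
    linarith
  have h := hf _ hmem
  rw [inner_sub_right, inner_smul_right, real_inner_self_eq_norm_sq] at h
  have : r / 2 / ‖f‖ * ‖f‖ ^ 2 = r / 2 * ‖f‖ := by field_simp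
  linarith

/-- A proper cone admits a uniformly positive functional. -/
lemma IsProperCone.exists_pos_functional (hC : IsProperCone C) :
    ∃ h : EucSp m, ∃ c : ℝ, 0 < c ∧ ∀ x ∈ C, c * ‖x‖ ≤ ⟪h, x⟫ := by
  have hconv : Convex ℝ (dualConeSet C) := by
    intro f hf g hg a b ha hb _ x hx
    rw [inner_add_left, real_inner_smul_left, real_inner_smul_left]
    exact add_nonneg (mul_nonneg ha (hf x hx)) (mul_nonneg hb (hg x hx))
  have h0 : (0 : EucSp m) ∈ dualConeSet C := fun x _ => by simp
  have hint : (interior (dualConeSet C)).Nonempty := by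
    rw [hconv.interior_nonempty_iff_affineSpan_eq_top, ← Set.insert_eq_of_mem h0]
    apply SetLike.coe_injective
    rw [affineSpan_insert_zero, hC.span_dual]
    rfl
  obtain ⟨h, hh⟩ := hint
  obtain ⟨c, hc, hcC⟩ := exists_le_inner_of_mem_interior hh
  refine ⟨h, c, hc, fun x hx => ?_⟩
  rw [real_inner_comm]
  refine hcC x fun f hf => ?_
  rw [real_inner_comm]
  exact hf x hx

/-- The nonnegative orthant is a proper cone. -/
lemma isProperCone_orthant (m : ℕ) : IsProperCone {x : EucSp m | ∀ i, 0 ≤ x i} where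
  isClosed := by
    simp only [Set.ofPred_forall]
    exact isClosed_iInter fun i => isClosed_le continuous_const (by fun_prop)
  convex := by
    intro x hx y hy a b ha hb _ i
    have h1 := mul_nonneg ha (hx i)
    have h2 := mul_nonneg hb (hy i)
    simpa using add_nonneg h1 h2
  smul_mem c hc x hx i := by simpa using mul_nonneg hc (hx i)
  pointed x hx hx' := by
    ext i
    have := hx' i
    simp only [PiLp.neg_apply] at this
    simpa using le_antisymm (by linarith) (hx i)
  solid := by
    have hopen : IsOpen {x : EucSp m | ∀ i, 0 < x i} := by
      simp only [Set.ofPred_forall]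
      exact isOpen_iInter_of_finite fun i => isOpen_lt continuous_const (by fun_prop)
    exact ⟨WithLp.toLp 2 fun _ => 1,
      interior_maximal (fun x hx i => (hx i).le) hopen fun i => by simp⟩

end Cone

section Tensor

variable {a b c : ℕ}

/-- The tensor product of two vectors, with coordinates indexed through `e`. -/
def vecTensor (e : Fin a × Fin b ≃ Fin c) (u : EucSp a) (v : EucSp b) : EucSp c :=
  WithLp.toLp 2 fun i => u (e.symm i).1 * v (e.symm i).2

@[simp] lemma vecTensor_apply (e : Fin a × Fin b ≃ Fin c) (u : EucSp a) (v : EucSp b)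
    (i : Fin c) : vecTensor e u v i = u (e.symm i).1 * v (e.symm i).2 := rfl

lemma vecTensor_add_left (e : Fin a × Fin b ≃ Fin c) (u u' : EucSp a) (v : EucSp b) :
    vecTensor e (u + u') v = vecTensor e u v + vecTensor e u' v := by
  ext i; simp [add_mul]

lemma vecTensor_add_right (e : Fin a × Fin b ≃ Fin c) (u : EucSp a) (v v' : EucSp b) :
    vecTensor e u (v + v') = vecTensor e u v + vecTensor e u v' := by
  ext i; simp [mul_add]

lemma vecTensor_smul_left (e : Fin a × Fin b ≃ Fin c) (t : ℝ) (u : EucSp a) (v : EucSp b) :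
    vecTensor e (t • u) v = t • vecTensor e u v := by
  ext i; simp [mul_assoc]

lemma vecTensor_smul_right (e : Fin a × Fin b ≃ Fin c) (t : ℝ) (u : EucSp a) (v : EucSp b) :
    vecTensor e u (t • v) = t • vecTensor e u v := by
  ext i; simp [mul_left_comm]

lemma inner_vecTensor (e : Fin a × Fin b ≃ Fin c) (u u' : EucSp a) (v v' : EucSp b) :
    ⟪vecTensor e u v, vecTensor e u' v'⟫ = ⟪u, u'⟫ * ⟪v, v'⟫ := by
  simp only [PiLp.inner_apply, vecTensor_apply, RCLike.inner_apply, conj_trivial]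
  rw [← e.sum_comp, Fintype.sum_prod_type, Finset.sum_mul_sum]
  simp only [Equiv.symm_apply_apply]
  exact Finset.sum_congr rfl fun i _ => Finset.sum_congr rfl fun j _ => by ring

lemma norm_vecTensor (e : Fin a × Fin b ≃ Fin c) (u : EucSp a) (v : EucSp b) :
    ‖vecTensor e u v‖ = ‖u‖ * ‖v‖ := by
  rw [← sq_eq_sq₀ (norm_nonneg _) (by positivity), ← real_inner_self_eq_norm_sq,
    inner_vecTensor, real_inner_self_eq_norm_sq, real_inner_self_eq_norm_sq]
  ring

lemma toEuclideanLin_kronecker_vecTensor (e : Fin a × Fin b ≃ Fin c)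
    (A : Matrix (Fin a) (Fin a) ℝ) (B : Matrix (Fin b) (Fin b) ℝ) (u : EucSp a) (v : EucSp b) :
    Matrix.toEuclideanLin (Matrix.reindex e e (Matrix.kroneckerMap (· * ·) A B))
      (vecTensor e u v) =
    vecTensor e (Matrix.toEuclideanLin A u) (Matrix.toEuclideanLin B v) := by
  ext i
  simp only [Matrix.ofLp_toLpLin, Matrix.toLin'_apply, vecTensor_apply, Matrix.mulVec, dotProduct,
    Matrix.reindex_apply, Matrix.submatrix_apply, Matrix.kroneckerMap_apply]
  rw [← e.sum_comp, Fintype.sum_prod_type, Finset.sum_mul_sum]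
  simp only [Equiv.symm_apply_apply]
  exact Finset.sum_congr rfl fun i _ => Finset.sum_congr rfl fun j _ => by ring

lemma toEuclideanLin_one_apply {m : ℕ} (x : EucSp m) :
    Matrix.toEuclideanLin (1 : Matrix (Fin m) (Fin m) ℝ) x = x := by
  rw [Matrix.toLpLin_one, LinearMap.id_apply]

lemma toEuclideanLin_mul_apply {m : ℕ} (A B : Matrix (Fin m) (Fin m) ℝ) (x : EucSp m) :
    Matrix.toEuclideanLin (A * B) x = Matrix.toEuclideanLin A (Matrix.toEuclideanLin B x) := by
  rw [Matrix.toLpLin_mul_same, LinearMap.comp_apply]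

lemma inner_toEuclideanLin_transpose {m : ℕ} (A : Matrix (Fin m) (Fin m) ℝ) (x y : EucSp m) :
    ⟪Matrix.toEuclideanLin A.transpose x, y⟫ = ⟪x, Matrix.toEuclideanLin A y⟫ := by
  rw [← Matrix.conjTranspose_eq_transpose_of_trivial,
    Matrix.toEuclideanLin_conjTranspose_eq_adjoint, LinearMap.adjoint_inner_left]

/-- The cone of tensors that are nonnegative against all products of dual elements. -/
def tensorCone (e : Fin a × Fin b ≃ Fin c) (K : Set (EucSp a)) (L : Set (EucSp b)) :
    Set (EucSp c) :=
  {T | ∀ f ∈ dualConeSet K, ∀ g ∈ dualConeSet L, 0 ≤ ⟪vecTensor e f g, T⟫}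

lemma eq_zero_of_inner_vecTensor (e : Fin a × Fin b ≃ Fin c) {K : Set (EucSp a)}
    {L : Set (EucSp b)} (hK : Submodule.span ℝ K = ⊤) (hL : Submodule.span ℝ L = ⊤)
    {T : EucSp c} (hT : ∀ f ∈ K, ∀ g ∈ L, ⟪vecTensor e f g, T⟫ = 0) : T = 0 := by
  have h1 : ∀ f ∈ K, ∀ g, ⟪vecTensor e f g, T⟫ = 0 := by
    intro f hf g
    have hg : g ∈ Submodule.span ℝ L := hL ▸ Submodule.mem_top
    induction hg using Submodule.span_induction with
    | mem g hg => exact hT f hf g hg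
    | zero => rw [← zero_smul ℝ (0 : EucSp b), vecTensor_smul_right]; simp
    | add x y _ _ hx hy => rw [vecTensor_add_right, inner_add_left, hx, hy, add_zero]
    | smul t x _ hx => rw [vecTensor_smul_right, real_inner_smul_left, hx, mul_zero]
  have h2 : ∀ f g, ⟪vecTensor e f g, T⟫ = 0 := by
    intro f g
    have hf : f ∈ Submodule.span ℝ K := hK ▸ Submodule.mem_top
    induction hf using Submodule.span_induction with
    | mem f hf => exact h1 f hf g
    | zero => rw [← zero_smul ℝ (0 : EucSp a), vecTensor_smul_left]; simp
    | add x y _ _ hx hy => rw [vecTensor_add_left, inner_add_left, hx, hy, add_zero]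
    | smul t x _ hx => rw [vecTensor_smul_left, real_inner_smul_left, hx, mul_zero]
  ext i
  have hsingle : vecTensor e (EuclideanSpace.single (e.symm i).1 1)
      (EuclideanSpace.single (e.symm i).2 1) = EuclideanSpace.single i (1 : ℝ) := by
    ext j
    rcases eq_or_ne j i with rfl | hj
    · simp
    · have : e.symm j ≠ e.symm i := fun h => hj (e.symm.injective h)
      rw [Ne, Prod.ext_iff, not_and_or] at this
      rcases this with h | h <;> simp [h, hj]
  have := h2 (EuclideanSpace.single (e.symm i).1 1) (EuclideanSpace.single (e.symm i).2 1)
  rw [hsingle, EuclideanSpace.inner_single_left] at this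
  simpa using this

lemma isProperCone_tensorCone (e : Fin a × Fin b ≃ Fin c) {K : Set (EucSp a)}
    {L : Set (EucSp b)} (hK : IsProperCone K) (hL : IsProperCone L) :
    IsProperCone (tensorCone e K L) where
  isClosed := by
    simp only [tensorCone, Set.ofPred_forall]
    exact isClosed_iInter fun f => isClosed_iInter fun _ => isClosed_iInter fun g =>
      isClosed_iInter fun _ => isClosed_le continuous_const (by fun_prop)
  convex := by
    intro x hx y hy s t hs ht _ f hf g hg
    rw [inner_add_right, real_inner_smul_right, real_inner_smul_right]
    exact add_nonneg (mul_nonneg hs (hx f hf g hg)) (mul_nonneg ht (hy f hf g hg))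
  smul_mem t ht x hx f hf g hg := by
    rw [real_inner_smul_right]
    exact mul_nonneg ht (hx f hf g hg)
  pointed x hx hx' := by
    refine eq_zero_of_inner_vecTensor e hK.span_dual hL.span_dual fun f hf g hg => ?_
    have := hx' f hf g hg
    rw [inner_neg_right] at this
    exact le_antisymm (by linarith) (hx f hf g hg)
  solid := by
    obtain ⟨x, hx⟩ := hK.solid
    obtain ⟨y, hy⟩ := hL.solid
    obtain ⟨r, hr, hxr⟩ := exists_le_inner_of_mem_interior hx
    obtain ⟨s, hs, hys⟩ := exists_le_inner_of_mem_interior hy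
    refine ⟨vecTensor e x y, mem_interior_iff_mem_nhds.2
      (mem_of_superset (Metric.ball_mem_nhds _ (mul_pos hr hs)) fun T hT f hf g hg => ?_)⟩
    rw [Metric.mem_ball, dist_eq_norm] at hT
    have h1 : r * ‖f‖ * (s * ‖g‖) ≤ ⟪vecTensor e f g, vecTensor e x y⟫ := by
      rw [inner_vecTensor]
      exact mul_le_mul (hxr f hf) (hys g hg) (by positivity) (hf x (interior_subset hx))
    have h2 : |⟪vecTensor e f g, T - vecTensor e x y⟫| ≤ ‖f‖ * ‖g‖ * (r * s) := by
      refine (abs_real_inner_le_norm _ _).trans ?_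
      rw [norm_vecTensor]
      gcongr
    rw [inner_sub_right] at h2
    have := neg_le_of_abs_le h2
    linarith

lemma leavesInv_tensorCone (e : Fin a × Fin b ≃ Fin c) {K : Set (EucSp a)}
    {L : Set (EucSp b)} {A : Matrix (Fin a) (Fin a) ℝ} {B : Matrix (Fin b) (Fin b) ℝ}
    (hA : LeavesInv A K) (hB : LeavesInv B L) :
    LeavesInv (Matrix.reindex e e (Matrix.kroneckerMap (· * ·) A B)) (tensorCone e K L) := by
  intro T hT f hf g hg
  rw [← inner_toEuclideanLin_transpose, Matrix.transpose_reindex,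
    ← Matrix.kroneckerMap_transpose, toEuclideanLin_kronecker_vecTensor]
  refine hT _ (fun x hx => ?_) _ (fun x hx => ?_)
  · rw [inner_toEuclideanLin_transpose]
    exact hf _ (hA x hx)
  · rw [inner_toEuclideanLin_transpose]
    exact hg _ (hB x hx)

end Tensor

section KronPow

variable {m : ℕ}

/-- The index equivalence used in the recursive definition of Kronecker powers. -/
def kronEquiv (m p : ℕ) : Fin (m ^ p) × Fin m ≃ Fin (m ^ (p + 1)) :=
  finProdFinEquiv.trans (finCongr (pow_succ m p).symm)

lemma kronPow_succ (A : Mat m) (p : ℕ) :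
    kronPow A (p + 1) = Matrix.reindex (kronEquiv m p) (kronEquiv m p)
      (Matrix.kroneckerMap (· * ·) (kronPow A p) A) := rfl

lemma vecKronPow_succ (x : EucSp m) (p : ℕ) :
    vecKronPow x (p + 1) = vecTensor (kronEquiv m p) (vecKronPow x p) x := rfl

lemma norm_vecKronPow (x : EucSp m) (p : ℕ) : ‖vecKronPow x p‖ = ‖x‖ ^ p := by
  induction p with
  | zero =>
    change ‖(WithLp.toLp 2 fun _ => 1 : EucSp 1)‖ = ‖x‖ ^ 0
    simp [EuclideanSpace.norm_eq]
  | succ p ih => rw [vecKronPow_succ, norm_vecTensor, ih, pow_succ]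

lemma toEuclideanLin_kronPow_vecKronPow (A : Mat m) (x : EucSp m) (p : ℕ) :
    Matrix.toEuclideanLin (kronPow A p) (vecKronPow x p) =
      vecKronPow (Matrix.toEuclideanLin A x) p := by
  induction p with
  | zero => exact toEuclideanLin_one_apply _
  | succ p ih =>
    rw [kronPow_succ, vecKronPow_succ, toEuclideanLin_kronecker_vecTensor, ih, vecKronPow_succ]

lemma kronPow_mul (A B : Mat m) (p : ℕ) :
    kronPow (A * B) p = kronPow A p * kronPow B p := by
  induction p with
  | zero => exact (mul_one _).symm
  | succ p ih =>
    simp only [kronPow_succ, ih, Matrix.reindex_apply, Matrix.submatrix_mul_equiv]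
    congr 1
    exact Matrix.mul_kronecker_mul _ _ _ _

/-- The iterated tensor cone of a cone. -/
def kronCone (K : Set (EucSp m)) : (p : ℕ) → Set (EucSp (m ^ p))
  | 0 => {x | ∀ i, 0 ≤ x i}
  | p + 1 => tensorCone (kronEquiv m p) (kronCone K p) K

lemma isProperCone_kronCone {K : Set (EucSp m)} (hK : IsProperCone K) (p : ℕ) :
    IsProperCone (kronCone K p) := by
  induction p with
  | zero => exact isProperCone_orthant _
  | succ p ih => exact isProperCone_tensorCone _ ih hK

lemma leavesInv_kronCone {K : Set (EucSp m)} {A : Mat m} (hA : LeavesInv A K) (p : ℕ) :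
    LeavesInv (kronPow A p) (kronCone K p) := by
  induction p with
  | zero =>
    intro x hx
    rwa [kronPow, toEuclideanLin_one_apply]
  | succ p ih => exact leavesInv_tensorCone _ ih hA

end KronPow

section ConeNorm

variable {m : ℕ} {C : Set (EucSp m)} {h : EucSp m} {c : ℝ}

/-- The gauge `x ↦ inf {⟪h, v + w⟫ : v, w ∈ C, x = v - w}` attached to a cone and a functional. -/
def coneNorm (C : Set (EucSp m)) (h x : EucSp m) : ℝ :=
  sInf {r : ℝ | ∃ v ∈ C, ∃ w ∈ C, x = v - w ∧ r = ⟪h, v + w⟫}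

/-- Every vector is a difference of two elements of a proper cone, of controlled size. -/
lemma IsProperCone.exists_decomposition (hC : IsProperCone C) :
    ∃ D : ℝ, 0 < D ∧ ∀ x : EucSp m, ∃ v ∈ C, ∃ w ∈ C, x = v - w ∧ ‖v + w‖ ≤ D * ‖x‖ := by
  obtain ⟨y, hy⟩ := hC.solid
  obtain ⟨r, hr, hball⟩ := Metric.isOpen_iff.1 isOpen_interior y hy
  refine ⟨4 / r * ‖y‖ + 1, by positivity, fun x => ?_⟩
  rcases eq_or_ne x 0 with rfl | hx0
  · exact ⟨0, hC.zero_mem, 0, hC.zero_mem, by simp, by simp⟩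
  have hx : 0 < ‖x‖ := norm_pos_iff.2 hx0
  set t : ℝ := 2 / r * ‖x‖ with ht
  have ht0 : 0 < t := by positivity
  have hmem : y + t⁻¹ • x ∈ C := by
    refine interior_subset (hball ?_)
    rw [Metric.mem_ball, dist_eq_norm, add_sub_cancel_left, norm_smul,
      Real.norm_of_nonneg (by positivity), ht]
    field_simp
    linarith
  refine ⟨t • (y + t⁻¹ • x), hC.smul_mem t ht0.le _ hmem, t • y,
    hC.smul_mem t ht0.le _ (interior_subset hy), ?_, ?_⟩
  · rw [smul_add, smul_inv_smul₀ ht0.ne', add_sub_cancel_left]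
  · rw [smul_add, smul_inv_smul₀ ht0.ne']
    calc ‖t • y + x + t • y‖ ≤ ‖t • y‖ + ‖x‖ + ‖t • y‖ := norm_add₃_le
      _ = (4 / r * ‖y‖ + 1) * ‖x‖ := by
        rw [norm_smul, Real.norm_of_nonneg ht0.le, ht]; ring

lemma coneNorm_le (hh : ∀ x ∈ C, 0 ≤ ⟪h, x⟫) {x v w : EucSp m} (hv : v ∈ C) (hw : w ∈ C)
    (hx : x = v - w) : coneNorm C h x ≤ ⟪h, v + w⟫ := by
  refine csInf_le ⟨0, ?_⟩ ⟨v, hv, w, hw, hx, rfl⟩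
  rintro _ ⟨v, hv, w, hw, -, rfl⟩
  rw [inner_add_right]
  exact add_nonneg (hh v hv) (hh w hw)

lemma le_coneNorm (hC : IsProperCone C) {x : EucSp m} {r : ℝ}
    (hr : ∀ v ∈ C, ∀ w ∈ C, x = v - w → r ≤ ⟪h, v + w⟫) : r ≤ coneNorm C h x := by
  obtain ⟨D, -, hD⟩ := hC.exists_decomposition
  obtain ⟨v, hv, w, hw, hx, -⟩ := hD x
  refine le_csInf ⟨_, v, hv, w, hw, hx, rfl⟩ ?_
  rintro _ ⟨v, hv, w, hw, hx, rfl⟩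
  exact hr v hv w hw hx

lemma coneNorm_of_mem (hC : IsProperCone C) (hh : ∀ x ∈ C, 0 ≤ ⟪h, x⟫) {x : EucSp m}
    (hx : x ∈ C) : coneNorm C h x = ⟪h, x⟫ := by
  refine le_antisymm ?_ (le_coneNorm hC fun v _ w hw hxvw => ?_)
  · simpa using coneNorm_le hh hx hC.zero_mem (sub_zero x).symm
  · rw [hxvw, inner_sub_right, inner_add_right]
    linarith [hh w hw]

lemma le_coneNorm_of_bound (hC : IsProperCone C) (hc : 0 < c)
    (hh : ∀ x ∈ C, c * ‖x‖ ≤ ⟪h, x⟫) (x : EucSp m) : c * ‖x‖ ≤ coneNorm C h x := by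
  refine le_coneNorm hC fun v hv w hw hx => ?_
  calc c * ‖x‖ ≤ c * (‖v‖ + ‖w‖) := by rw [hx]; gcongr; exact norm_sub_le v w
    _ ≤ ⟪h, v + w⟫ := by rw [inner_add_right]; linarith [hh v hv, hh w hw]

lemma exists_coneNorm_le (hC : IsProperCone C) (hh : ∀ x ∈ C, 0 ≤ ⟪h, x⟫) :
    ∃ D : ℝ, 0 < D ∧ ∀ x, coneNorm C h x ≤ D * ‖x‖ := by
  obtain ⟨D, hD0, hD⟩ := hC.exists_decomposition
  refine ⟨(‖h‖ + 1) * D, by positivity, fun x => ?_⟩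
  obtain ⟨v, hv, w, hw, hx, hvw⟩ := hD x
  calc coneNorm C h x ≤ ⟪h, v + w⟫ := coneNorm_le hh hv hw hx
    _ ≤ ‖h‖ * ‖v + w‖ := real_inner_le_norm _ _
    _ ≤ (‖h‖ + 1) * (D * ‖x‖) := by gcongr; linarith
    _ = (‖h‖ + 1) * D * ‖x‖ := by ring

lemma coneNorm_smul_le (hC : IsProperCone C) (hh : ∀ x ∈ C, 0 ≤ ⟪h, x⟫) {a : ℝ} (ha : a ≠ 0)
    (x : EucSp m) : coneNorm C h (a • x) ≤ |a| * coneNorm C h x := by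
  have ha' : 0 < |a| := abs_pos.2 ha
  rw [← div_le_iff₀' ha']
  refine le_coneNorm hC fun v hv w hw hx => ?_
  rw [div_le_iff₀' ha', ← real_inner_smul_right]
  have hv' := hC.smul_mem _ ha'.le v hv
  have hw' := hC.smul_mem _ ha'.le w hw
  rcases abs_cases a with ⟨h1, -⟩ | ⟨h1, -⟩
  · rw [smul_add]
    exact coneNorm_le hh hv' hw' (by rw [hx, h1, smul_sub])
  · rw [smul_add, add_comm]
    exact coneNorm_le hh hw' hv' (by rw [hx, h1, smul_sub, neg_smul, neg_smul]; abel)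

lemma isNormFn_coneNorm (hC : IsProperCone C) (hc : 0 < c)
    (hh : ∀ x ∈ C, c * ‖x‖ ≤ ⟪h, x⟫) : IsNormFn (coneNorm C h) := by
  have hh0 : ∀ x ∈ C, 0 ≤ ⟪h, x⟫ := fun x hx => le_trans (by positivity) (hh x hx)
  have hzero : coneNorm C h 0 = 0 := by
    rw [coneNorm_of_mem hC hh0 hC.zero_mem, inner_zero_right]
  refine ⟨fun x => le_trans (by positivity) (le_coneNorm_of_bound hC hc hh x),
    fun x => ⟨fun hx => ?_, fun hx => hx ▸ hzero⟩, fun a x => ?_, fun x y => ?_⟩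
  · have := le_coneNorm_of_bound hC hc hh x
    rw [hx] at this
    exact norm_le_zero_iff.1 (nonpos_of_mul_nonpos_right this hc)
  · rcases eq_or_ne a 0 with rfl | ha
    · simp [hzero]
    refine le_antisymm (coneNorm_smul_le hC hh0 ha x) ?_
    have := coneNorm_smul_le hC hh0 (inv_ne_zero ha) (a • x)
    rwa [inv_smul_smul₀ ha, abs_inv, ← div_eq_inv_mul, le_div_iff₀' (abs_pos.2 ha)] at this
  · rw [← sub_le_iff_le_add]
    refine le_coneNorm hC fun v hv w hw hx => ?_
    rw [sub_le_comm]
    refine le_coneNorm hC fun v' hv' w' hw' hy => ?_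
    rw [sub_le_iff_le_add, ← inner_add_right]
    have := coneNorm_le hh0 (x := x + y) (hC.add_mem hv' hv) (hC.add_mem hw' hw)
      (by rw [hx, hy]; abel)
    rwa [add_add_add_comm] at this

lemma isConeAbsolute_coneNorm (hC : IsProperCone C) (hh : ∀ x ∈ C, 0 ≤ ⟪h, x⟫) :
    IsConeAbsolute C (coneNorm C h) := by
  intro x
  rw [coneNorm]
  congr 1
  ext r
  constructor
  · rintro ⟨v, hv, w, hw, hx, rfl⟩
    exact ⟨v, hv, w, hw, hx, (coneNorm_of_mem hC hh (hC.add_mem hv hw)).symm⟩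
  · rintro ⟨v, hv, w, hw, hx, rfl⟩
    exact ⟨v, hv, w, hw, hx, coneNorm_of_mem hC hh (hC.add_mem hv hw)⟩

lemma isConeLinear_coneNorm (hC : IsProperCone C) (hh : ∀ x ∈ C, 0 ≤ ⟪h, x⟫) :
    IsConeLinear C (coneNorm C h) :=
  ⟨h, hh, fun _ hx => coneNorm_of_mem hC hh hx⟩

end ConeNorm

section OpNorm

variable {m : ℕ}

instance matBorelSpace (m : ℕ) : BorelSpace (Mat m) :=
  inferInstanceAs (BorelSpace (Fin m → Fin m → ℝ))

instance matSecondCountableTopology (m : ℕ) : SecondCountableTopology (Mat m) :=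
  inferInstanceAs (SecondCountableTopology (Fin m → Fin m → ℝ))

lemma opNorm_nonneg (A : Mat m) : 0 ≤ opNorm A := norm_nonneg _

lemma norm_toEuclideanLin_le (A : Mat m) (x : EucSp m) :
    ‖Matrix.toEuclideanLin A x‖ ≤ opNorm A * ‖x‖ :=
  (LinearMap.toContinuousLinearMap (Matrix.toEuclideanLin A)).le_opNorm x

lemma opNorm_mul_le (A B : Mat m) : opNorm (A * B) ≤ opNorm A * opNorm B := by
  refine ContinuousLinearMap.opNorm_le_bound _
    (mul_nonneg (opNorm_nonneg A) (opNorm_nonneg B)) fun x => ?_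
  rw [LinearMap.coe_toContinuousLinearMap', toEuclideanLin_mul_apply, mul_assoc]
  exact (norm_toEuclideanLin_le A _).trans
    (mul_le_mul_of_nonneg_left (norm_toEuclideanLin_le B x) (opNorm_nonneg A))

lemma opNorm_one_le : opNorm (1 : Mat m) ≤ 1 := by
  refine ContinuousLinearMap.opNorm_le_bound _ zero_le_one fun x => ?_
  rw [LinearMap.coe_toContinuousLinearMap', toEuclideanLin_one_apply, one_mul]

lemma abs_apply_le_opNorm (A : Mat m) (i j : Fin m) : |A i j| ≤ opNorm A := by
  have h1 := norm_toEuclideanLin_le A (PiLp.single 2 j 1)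
  have h2 := PiLp.norm_apply_le (Matrix.toEuclideanLin A (PiLp.single 2 j 1)) i
  rw [PiLp.norm_single, norm_one, mul_one] at h1
  rw [Matrix.ofLp_toLpLin, Matrix.toLin'_apply, PiLp.ofLp_single, Matrix.mulVec_single_one,
    Matrix.col_apply, Real.norm_eq_abs] at h2
  exact h2.trans h1

lemma continuous_opNorm : Continuous (opNorm : Mat m → ℝ) := by
  have : Continuous ((LinearMap.toContinuousLinearMap :
      (EucSp m →ₗ[ℝ] EucSp m) ≃ₗ[ℝ] _).toLinearMap ∘ₗ
      (Matrix.toEuclideanLin : Mat m ≃ₗ[ℝ] _).toLinearMap) :=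
    LinearMap.continuous_of_finiteDimensional _
  exact this.norm

lemma ae_mem_msupport (μ : Measure (Mat m)) : ∀ᵐ A ∂μ, A ∈ msupport μ := by
  refine measure_null_of_locally_null _ fun A hA => ?_
  have hA' : ¬ ∀ ε : ℝ, 0 < ε → μ {B | opNorm (B - A) < ε} ≠ 0 := hA
  push Not at hA'
  obtain ⟨ε, hε, h0⟩ := hA'
  refine ⟨_, mem_nhdsWithin_of_mem_nhds (IsOpen.mem_nhds ?_ ?_), h0⟩
  · exact isOpen_lt (continuous_opNorm.comp (continuous_id.sub continuous_const))
      continuous_const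
  · simpa [opNorm] using hε

lemma abs_kronPow_apply_le (A : Mat m) (p : ℕ) (i j : Fin (m ^ p)) :
    |kronPow A p i j| ≤ opNorm A ^ p := by
  induction p with
  | zero =>
    rw [pow_zero, kronPow, Matrix.one_apply]
    split_ifs <;> simp
  | succ p ih =>
    rw [kronPow_succ, Matrix.reindex_apply, Matrix.submatrix_apply, Matrix.kroneckerMap_apply,
      abs_mul]
    exact (mul_le_mul (ih _ _) (abs_apply_le_opNorm A _ _) (abs_nonneg _)
      (pow_nonneg (opNorm_nonneg A) p)).trans_eq (pow_succ _ p).symm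

lemma kronPow_one (p : ℕ) : kronPow (1 : Mat m) p = 1 := by
  induction p with
  | zero => rfl
  | succ p ih =>
    rw [kronPow_succ, ih, Matrix.reindex_apply]
    exact (congrArg (fun X => Matrix.submatrix X _ _) Matrix.one_kronecker_one).trans
      (Matrix.submatrix_one_equiv _)

lemma continuous_kronPow_apply (p : ℕ) (i j : Fin (m ^ p)) :
    Continuous fun A : Mat m => kronPow A p i j := by
  induction p with
  | zero => exact continuous_const
  | succ p ih =>
    simp only [kronPow_succ, Matrix.reindex_apply, Matrix.submatrix_apply,
      Matrix.kroneckerMap_apply]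
    exact (ih _ _).mul (continuous_id.matrix_elem _ _)

lemma prodRev_zero (f : Fin 0 → Mat m) : prodRev f = 1 := by simp [prodRev]

lemma prodRev_succ {k : ℕ} (f : Fin (k + 1) → Mat m) :
    prodRev f = prodRev (fun i : Fin k => f i.succ) * f 0 := by
  simp [prodRev, List.ofFn_succ]

lemma continuous_prodRev (k : ℕ) : Continuous (prodRev : (Fin k → Mat m) → Mat m) := by
  induction k with
  | zero => simpa only [funext prodRev_zero] using continuous_const
  | succ k ih =>
    simp only [funext prodRev_succ]
    exact (ih.comp (by fun_prop)).mul (continuous_apply 0)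

lemma opNorm_prodRev_le {k : ℕ} {R : ℝ} (hR : 0 ≤ R) (f : Fin k → Mat m)
    (hf : ∀ i, opNorm (f i) ≤ R) : opNorm (prodRev f) ≤ R ^ k := by
  induction k with
  | zero => simpa only [prodRev_zero, pow_zero] using opNorm_one_le
  | succ k ih =>
    rw [prodRev_succ, pow_succ]
    exact (opNorm_mul_le _ _).trans
      (mul_le_mul (ih _ fun i => hf _) (hf 0) (opNorm_nonneg _) (pow_nonneg hR k))

end OpNorm

section Moments

variable {m : ℕ} {μ : Measure (Mat m)}

lemma HasBoundedSupport.exists_ae_le (hμ : HasBoundedSupport μ) :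
    ∃ R : ℝ, 0 ≤ R ∧ ∀ᵐ A ∂μ, opNorm A ≤ R := by
  obtain ⟨R, hR⟩ := hμ
  refine ⟨max R 0, le_max_right _ _, ?_⟩
  filter_upwards [ae_mem_msupport μ] with A hA
  exact (hR A hA).trans (le_max_left _ _)

lemma kExpNorm_nonneg (p k : ℕ) : 0 ≤ kExpNorm μ p k :=
  integral_nonneg fun _ => pow_nonneg (opNorm_nonneg _) p

variable [IsProbabilityMeasure μ]

lemma ae_opNorm_prodRev_le {R : ℝ} (hR : 0 ≤ R) (hμ : ∀ᵐ A ∂μ, opNorm A ≤ R) (k : ℕ) :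
    ∀ᵐ f ∂(Measure.pi fun _ : Fin k => μ), opNorm (prodRev f) ≤ R ^ k := by
  have : ∀ᵐ f ∂(Measure.pi fun _ : Fin k => μ), ∀ i, opNorm (f i) ≤ R :=
    ae_all_iff.2 fun i =>
      (measurePreserving_eval (fun _ : Fin k => μ) i).quasiMeasurePreserving.ae hμ
  filter_upwards [this] with f hf using opNorm_prodRev_le hR f hf

lemma integrable_opNorm_prodRev_pow (hμ : HasBoundedSupport μ) (p k : ℕ) :
    Integrable (fun f : Fin k → Mat m => opNorm (prodRev f) ^ p)
      (Measure.pi fun _ => μ) := by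
  obtain ⟨R, hR, hμR⟩ := hμ.exists_ae_le
  refine Integrable.of_bound (C := (R ^ k) ^ p)
    ((continuous_opNorm.comp (continuous_prodRev k)).pow p).aestronglyMeasurable ?_
  filter_upwards [ae_opNorm_prodRev_le hR hμR k] with f hf
  rw [norm_pow, Real.norm_of_nonneg (opNorm_nonneg _)]
  exact pow_le_pow_left₀ (opNorm_nonneg _) hf p

lemma exists_kExpNorm_le (hμ : HasBoundedSupport μ) (p : ℕ) :
    ∃ R : ℝ, 0 ≤ R ∧ ∀ k, kExpNorm μ p k ≤ R ^ (p * k) := by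
  obtain ⟨R, hR, hμR⟩ := hμ.exists_ae_le
  refine ⟨R, hR, fun k => ?_⟩
  have := integral_mono_ae (integrable_opNorm_prodRev_pow hμ p k)
    (integrable_const ((R ^ k) ^ p)) (by
      filter_upwards [ae_opNorm_prodRev_le hR hμR k] with f hf
      exact pow_le_pow_left₀ (opNorm_nonneg _) hf p)
  rwa [integral_const, probReal_univ, one_smul, ← pow_mul, mul_comm k p] at this

lemma integrable_kronPow_prodRev (hμ : HasBoundedSupport μ) (p k : ℕ) (i j : Fin (m ^ p)) :
    Integrable (fun f : Fin k → Mat m => kronPow (prodRev f) p i j)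
      (Measure.pi fun _ => μ) :=
  (integrable_opNorm_prodRev_pow hμ p k).mono'
    ((continuous_kronPow_apply p i j).comp (continuous_prodRev k)).aestronglyMeasurable
    (ae_of_all _ fun _ => abs_kronPow_apply_le _ p i j)

lemma integrable_kronPow (hμ : HasBoundedSupport μ) (p : ℕ) (i j : Fin (m ^ p)) :
    Integrable (fun A => kronPow A p i j) μ := by
  obtain ⟨R, hR, hμR⟩ := hμ.exists_ae_le
  refine Integrable.of_bound (C := R ^ p)
    (continuous_kronPow_apply p i j).aestronglyMeasurable ?_
  filter_upwards [hμR] with A hA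
  exact (abs_kronPow_apply_le A p i j).trans (pow_le_pow_left₀ (opNorm_nonneg _) hA p)

lemma kronExp_pow_apply (hμ : HasBoundedSupport μ) (p k : ℕ) (i j : Fin (m ^ p)) :
    (kronExp μ p ^ k) i j =
      ∫ f : Fin k → Mat m, kronPow (prodRev f) p i j ∂(Measure.pi fun _ => μ) := by
  induction k generalizing i j with
  | zero =>
    simp [prodRev_zero, kronPow_one]
  | succ k ih =>
    rw [pow_succ, Matrix.mul_apply,
      ← (measurePreserving_piFinSuccAbove (fun _ : Fin (k + 1) => μ) 0).symm.integral_comp'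
        (g := fun f : Fin (k + 1) → Mat m => kronPow (prodRev f) p i j)]
    have hterm : ∀ l, (kronExp μ p ^ k) i l * kronExp μ p l j =
        ∫ z : Mat m × (Fin k → Mat m), kronPow z.1 p l j * kronPow (prodRev z.2) p i l
          ∂(μ.prod (Measure.pi fun _ => μ)) := by
      intro l
      rw [ih, integral_prod_mul (fun A => kronPow A p l j)
        (fun f : Fin k → Mat m => kronPow (prodRev f) p i l), mul_comm]
      rfl
    rw [Finset.sum_congr rfl fun l _ => hterm l, ← integral_finsetSum]
    · refine integral_congr_ae (ae_of_all _ fun z => ?_)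
      have : prodRev ((MeasurableEquiv.piFinSuccAbove (fun _ => Mat m) 0).symm z) =
          prodRev z.2 * z.1 := by
        rw [prodRev_succ]
        rfl
      simp only [this, kronPow_mul, Matrix.mul_apply]
      exact Finset.sum_congr rfl fun l _ => mul_comm _ _
    · exact fun l _ => (integrable_kronPow hμ p l j).mul_prod
        (integrable_kronPow_prodRev hμ p k i l)

lemma abs_kronExp_pow_apply_le (hμ : HasBoundedSupport μ) (p k : ℕ) (i j : Fin (m ^ p)) :
    |(kronExp μ p ^ k) i j| ≤ kExpNorm μ p k := by
  rw [kronExp_pow_apply hμ, ← Real.norm_eq_abs]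
  exact norm_integral_le_of_norm_le (integrable_opNorm_prodRev_pow hμ p k)
    (ae_of_all _ fun _ => abs_kronPow_apply_le _ p i j)

lemma inner_toEuclideanLin_eq_sum {d : ℕ} (X : Matrix (Fin d) (Fin d) ℝ) (x y : EucSp d) :
    ⟪x, Matrix.toEuclideanLin X y⟫ = ∑ i, ∑ j, x i * y j * X i j := by
  simp only [PiLp.inner_apply, RCLike.inner_apply, conj_trivial, Matrix.ofLp_toLpLin,
    Matrix.toLin'_apply, Matrix.mulVec, dotProduct, Finset.sum_mul]
  exact Finset.sum_congr rfl fun i _ => Finset.sum_congr rfl fun j _ => by ring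

lemma integrable_inner_kronPow (hμ : HasBoundedSupport μ) (p : ℕ) (x y : EucSp (m ^ p)) :
    Integrable (fun A => ⟪x, Matrix.toEuclideanLin (kronPow A p) y⟫) μ := by
  simp only [inner_toEuclideanLin_eq_sum]
  exact integrable_finsetSum _ fun i _ => integrable_finsetSum _ fun j _ =>
    (integrable_kronPow hμ p i j).const_mul _

lemma integral_inner_kronPow (hμ : HasBoundedSupport μ) (p : ℕ) (x y : EucSp (m ^ p)) :
    ∫ A, ⟪x, Matrix.toEuclideanLin (kronPow A p) y⟫ ∂μ =
      ⟪x, Matrix.toEuclideanLin (kronExp μ p) y⟫ := by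
  simp only [inner_toEuclideanLin_eq_sum]
  rw [integral_finsetSum _ fun i _ => integrable_finsetSum _ fun j _ =>
    (integrable_kronPow hμ p i j).const_mul _]
  refine Finset.sum_congr rfl fun i _ => ?_
  rw [integral_finsetSum _ fun j _ => (integrable_kronPow hμ p i j).const_mul _]
  exact Finset.sum_congr rfl fun j _ => integral_const_mul _ _

lemma abs_inner_kronExp_pow_le (hμ : HasBoundedSupport μ) (p k : ℕ) (x y : EucSp (m ^ p)) :
    |⟪x, Matrix.toEuclideanLin (kronExp μ p ^ k) y⟫| ≤
      (m ^ p : ℕ) ^ 2 * ‖x‖ * kExpNorm μ p k * ‖y‖ := by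
  rw [inner_toEuclideanLin_eq_sum]
  calc |∑ i, ∑ j, x i * y j * (kronExp μ p ^ k) i j|
      ≤ ∑ i : Fin (m ^ p), ∑ j : Fin (m ^ p), ‖x‖ * ‖y‖ * kExpNorm μ p k := by
        refine (Finset.abs_sum_le_sum_abs _ _).trans (Finset.sum_le_sum fun i _ =>
          (Finset.abs_sum_le_sum_abs _ _).trans (Finset.sum_le_sum fun j _ => ?_))
        rw [abs_mul, abs_mul]
        exact mul_le_mul (mul_le_mul (PiLp.norm_apply_le x i) (PiLp.norm_apply_le y j)
          (abs_nonneg _) (norm_nonneg _)) (abs_kronExp_pow_apply_le hμ p k i j)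
          (abs_nonneg _) (by positivity)
    _ = (m ^ p : ℕ) ^ 2 * ‖x‖ * kExpNorm μ p k * ‖y‖ := by
        simp only [Finset.sum_const, Finset.card_univ, Fintype.card_fin, nsmul_eq_mul]
        ring

/-- An invariant proper cone is preserved by the expected Kronecker power. -/
lemma leavesInv_kronExp (hμ : HasBoundedSupport μ) {p : ℕ} {C : Set (EucSp (m ^ p))}
    (hC : IsProperCone C) (hinv : ∀ B ∈ msupport μ, LeavesInv (kronPow B p) C) :
    LeavesInv (kronExp μ p) C := by
  intro x hx
  refine hC.mem_of_dual fun f hf => ?_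
  rw [← integral_inner_kronPow hμ]
  refine integral_nonneg_of_ae ?_
  filter_upwards [ae_mem_msupport μ] with A hA
  exact hf _ (hinv A hA x hx)

lemma leavesInv_pow {d : ℕ} {X : Matrix (Fin d) (Fin d) ℝ} {C : Set (EucSp d)}
    (hX : LeavesInv X C) (k : ℕ) : LeavesInv (X ^ k) C := by
  induction k with
  | zero => intro x hx; rwa [pow_zero, toEuclideanLin_one_apply]
  | succ k ih =>
    intro x hx
    rw [pow_succ, toEuclideanLin_mul_apply]
    exact ih _ (hX x hx)

end Moments

section Lyapunov

variable {m : ℕ} {μ : Measure (Mat m)} [IsProbabilityMeasure μ]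

lemma exists_kExpNorm_lt_pow (hμ : HasBoundedSupport μ) {p : ℕ} (hp : 1 ≤ p) {γ : ℝ}
    (hγ : pRadius μ p < γ) :
    0 < γ ∧ ∀ᶠ k in atTop, kExpNorm μ p k < (γ ^ p) ^ k := by
  obtain ⟨R, hR, hRk⟩ := exists_kExpNorm_le hμ p
  have hbdd : IsBoundedUnder (· ≤ ·) atTop
      fun k : ℕ => kExpNorm μ p k ^ (1 / (p * k : ℝ)) := by
    refine isBoundedUnder_of_eventually_le (a := R) ?_
    filter_upwards [eventually_ge_atTop 1] with k hk
    have hpk : p * k ≠ 0 := by positivity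
    calc kExpNorm μ p k ^ (1 / (p * k : ℝ)) ≤ (R ^ (p * k)) ^ (1 / (p * k : ℝ)) :=
          Real.rpow_le_rpow (kExpNorm_nonneg p k) (hRk k) (by positivity)
      _ = R := by
        have := Real.pow_rpow_inv_natCast hR hpk
        rwa [Nat.cast_mul, ← one_div] at this
  have hev := eventually_lt_of_limsup_lt hγ hbdd
  have hγ0 : 0 < γ := by
    obtain ⟨k, hk⟩ := hev.exists
    exact (Real.rpow_nonneg (kExpNorm_nonneg p k) _).trans_lt hk
  refine ⟨hγ0, ?_⟩
  filter_upwards [hev, eventually_ge_atTop 1] with k hk hk1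
  have hpk : p * k ≠ 0 := by positivity
  have h1 := pow_lt_pow_left₀ hk (Real.rpow_nonneg (kExpNorm_nonneg p k) _) hpk
  have h2 := Real.rpow_inv_natCast_pow (kExpNorm_nonneg (μ := μ) p k) hpk
  rw [Nat.cast_mul, ← one_div] at h2
  rwa [h2, pow_mul] at h1

lemma exists_kExpNorm_le_mul_pow (hμ : HasBoundedSupport μ) {p : ℕ} (hp : 1 ≤ p) {γ : ℝ}
    (hγ : pRadius μ p < γ) {ε : ℝ} (hε : 0 < ε) :
    ∃ k, 1 ≤ k ∧ kExpNorm μ p k ≤ ε * (γ ^ p) ^ k := by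
  obtain ⟨δ, hδ, hδγ⟩ := exists_between hγ
  obtain ⟨hδ0, hev⟩ := exists_kExpNorm_lt_pow hμ hp hδ
  have hγ0 : 0 < γ := hδ0.trans hδγ
  have hlt : (δ / γ) ^ p < 1 :=
    pow_lt_one₀ (by positivity) ((div_lt_one hγ0).2 hδγ) (by omega)
  have htend := tendsto_pow_atTop_nhds_zero_of_lt_one (by positivity) hlt
  obtain ⟨k, ⟨hk, hk1⟩, hkε⟩ :=
    ((hev.and (eventually_ge_atTop 1)).and (htend.eventually (gt_mem_nhds hε))).exists
  refine ⟨k, hk1, hk.le.trans ?_⟩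
  rw [div_pow, div_pow, div_lt_iff₀ (by positivity)] at hkε
  exact hkε.le

/-- A matrix preserving a proper cone, one of whose powers is small relative to `q`, admits a
uniformly positive functional contracted at rate `q`. -/
lemma exists_contracted_functional {d : ℕ} {X : Matrix (Fin d) (Fin d) ℝ} {C : Set (EucSp d)}
    (hX : LeavesInv X C) {q c : ℝ} (hq : 0 < q) {h₀ : EucSp d}
    (hc : 0 < c) (hh₀ : ∀ x ∈ C, c * ‖x‖ ≤ ⟪h₀, x⟫) {N : ℕ} (hN : 1 ≤ N)
    (hXN : ∀ x ∈ C, ⟪h₀, Matrix.toEuclideanLin (X ^ N) x⟫ ≤ q ^ N * ⟪h₀, x⟫) :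
    ∃ h : EucSp d, (∀ x ∈ C, c * ‖x‖ ≤ ⟪h, x⟫) ∧
      ∀ x ∈ C, ⟪h, Matrix.toEuclideanLin X x⟫ ≤ q * ⟪h, x⟫ := by
  set h : EucSp d :=
    ∑ k ∈ Finset.range N, (q⁻¹) ^ k • Matrix.toEuclideanLin (X ^ k).transpose h₀ with hdef
  have hinner : ∀ x, ⟪h, x⟫ =
      ∑ k ∈ Finset.range N, (q⁻¹) ^ k * ⟪h₀, Matrix.toEuclideanLin (X ^ k) x⟫ := by
    intro x
    rw [hdef, sum_inner]
    exact Finset.sum_congr rfl fun k _ => by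
      rw [real_inner_smul_left, inner_toEuclideanLin_transpose]
  refine ⟨h, fun x hx => (hh₀ x hx).trans ?_, fun x hx => ?_⟩
  · have := Finset.single_le_sum
      (f := fun k => (q⁻¹) ^ k * ⟪h₀, Matrix.toEuclideanLin (X ^ k) x⟫)
      (fun k _ => mul_nonneg (by positivity)
        (le_trans (by positivity) (hh₀ _ (leavesInv_pow hX k x hx))))
      (Finset.mem_range.2 hN)
    rw [hinner]
    simpa [toEuclideanLin_one_apply] using this
  · set s : ℕ → ℝ := fun k => (q⁻¹) ^ k * ⟪h₀, Matrix.toEuclideanLin (X ^ k) x⟫ with hs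
    have hshift : ⟪h, Matrix.toEuclideanLin X x⟫ = q * ∑ k ∈ Finset.range N, s (k + 1) := by
      rw [hinner, Finset.mul_sum]
      refine Finset.sum_congr rfl fun k _ => ?_
      rw [hs, ← toEuclideanLin_mul_apply, ← pow_succ, ← mul_assoc, pow_succ' (q⁻¹) k,
        mul_inv_cancel_left₀ hq.ne']
    have htel : ∑ k ∈ Finset.range N, s (k + 1) + s 0 = ⟪h, x⟫ + s N := by
      rw [hinner, ← Finset.sum_range_succ', Finset.sum_range_succ]
    have hsN : s N ≤ s 0 := by
      have := mul_le_mul_of_nonneg_left (hXN x hx) (by positivity : 0 ≤ (q⁻¹) ^ N)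
      rw [← mul_assoc, ← mul_pow, inv_mul_cancel₀ hq.ne', one_pow, one_mul] at this
      simpa [hs, toEuclideanLin_one_apply] using this
    rw [hshift]
    gcongr
    linarith

lemma isStochLyap_coneNorm (hμ : HasBoundedSupport μ) {p : ℕ} {C : Set (EucSp (m ^ p))}
    (hC : IsProperCone C) (hinv : ∀ B ∈ msupport μ, LeavesInv (kronPow B p) C) {γ c : ℝ}
    (hγ : 0 < γ) (hc : 0 < c) {h : EucSp (m ^ p)} (hh : ∀ x ∈ C, c * ‖x‖ ≤ ⟪h, x⟫)
    (hcontr : ∀ x ∈ C, ⟪h, Matrix.toEuclideanLin (kronExp μ p) x⟫ ≤ γ ^ p * ⟪h, x⟫) :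
    IsStochLyap μ p γ fun x => coneNorm C h (vecKronPow x p) := by
  have hh0 : ∀ x ∈ C, 0 ≤ ⟪h, x⟫ := fun x hx => le_trans (by positivity) (hh x hx)
  obtain ⟨D, hD, hDle⟩ := exists_coneNorm_le hC hh0
  refine ⟨⟨c, hc, D, hD, fun x => ?_⟩, fun x => ?_⟩
  · rw [← norm_vecKronPow]
    exact ⟨le_coneNorm_of_bound hC hc hh _, hDle _⟩
  · have hγp : 0 < γ ^ p := by positivity
    rw [← div_le_iff₀' hγp]
    refine le_coneNorm hC fun v hv w hw hx => ?_
    rw [div_le_iff₀' hγp]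
    refine le_trans ?_ (hcontr _ (hC.add_mem hv hw))
    rw [← integral_inner_kronPow hμ]
    refine integral_mono_of_nonneg (ae_of_all _ fun A => (isNormFn_coneNorm hC hc hh).1 _)
      (integrable_inner_kronPow hμ p _ _) ?_
    filter_upwards [ae_mem_msupport μ] with A hA
    rw [← toEuclideanLin_kronPow_vecKronPow, hx, map_sub, map_add]
    exact coneNorm_le hh0 (hinv A hA v hv) (hinv A hA w hw) rfl

end Lyapunov

/-- If `supp μ` leaves a proper cone invariant and `Σ_μ` is `p`th mean stable
with `γ ∈ (ρ_{p,μ}, 1)`, then there are a proper cone `K_p ⊆ ℝ^{n^p}` left invariant by the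
`p`-th Kronecker powers of matrices in `supp μ` and a cone linear absolute norm `‖·‖_g` on
`ℝ^{n^p}` w.r.t. `K_p` such that `V(x) = ‖x^{⊗p}‖_g` is a stochastic Lyapunov function of
degree `p` with growth rate `γ`. -/
theorem stmt19 (n : ℕ) (hn : 1 ≤ n) (μ : Measure (Mat n)) [IsProbabilityMeasure μ]
    (hbdd : HasBoundedSupport μ)
    (K : Set (EucSp n)) (hK : IsProperCone K) (hinv : SetLeavesInv (msupport μ) K)
    (p : ℕ) (hp : 1 ≤ p) (hstab : pRadius μ p < 1)
    (γ : ℝ) (hγl : pRadius μ p < γ) (hγ1 : γ < 1) :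
    ∃ Kp : Set (EucSp (n ^ p)), IsProperCone Kp ∧
      (∀ B ∈ msupport μ, LeavesInv (kronPow B p) Kp) ∧
      ∃ g : EucSp (n ^ p) → ℝ, IsNormFn g ∧ IsConeAbsolute Kp g ∧ IsConeLinear Kp g ∧
        IsStochLyap μ p γ (fun x : EucSp n => g (vecKronPow x p)) := by
  have hC : IsProperCone (kronCone K p) := isProperCone_kronCone hK p
  have hCinv : ∀ B ∈ msupport μ, LeavesInv (kronPow B p) (kronCone K p) := fun B hB =>
    leavesInv_kronCone (hinv B hB) p
  have hγ0 : 0 < γ := (exists_kExpNorm_lt_pow hbdd hp hγl).1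
  obtain ⟨h₀, c, hc, hh₀⟩ := hC.exists_pos_functional
  set D : ℝ := (n ^ p : ℕ) ^ 2 * ‖h₀‖ + 1 with hD
  have hD0 : 0 < D := by positivity
  obtain ⟨N, hN, hkN⟩ := exists_kExpNorm_le_mul_pow hbdd hp hγl (div_pos hc hD0)
  obtain ⟨h, hh, hcontr⟩ := exists_contracted_functional (leavesInv_kronExp hbdd hC hCinv)
    (pow_pos hγ0 p) hc hh₀ hN fun x hx => by
      have hk0 := kExpNorm_nonneg (μ := μ) p N
      calc ⟪h₀, Matrix.toEuclideanLin (kronExp μ p ^ N) x⟫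
          ≤ (n ^ p : ℕ) ^ 2 * ‖h₀‖ * kExpNorm μ p N * ‖x‖ :=
            (le_abs_self _).trans (abs_inner_kronExp_pow_le hbdd p N h₀ x)
        _ ≤ D * (c / D * (γ ^ p) ^ N) * ‖x‖ := by
            gcongr
            linarith
        _ = (γ ^ p) ^ N * (c * ‖x‖) := by field_simp
        _ ≤ (γ ^ p) ^ N * ⟪h₀, x⟫ := by
            gcongr
            exact hh₀ x hx
  have hh0 : ∀ x ∈ kronCone K p, 0 ≤ ⟪h, x⟫ := fun x hx => le_trans (by positivity) (hh x hx)
  exact ⟨kronCone K p, hC, hCinv, coneNorm (kronCone K p) h, isNormFn_coneNorm hC hc hh,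
    isConeAbsolute_coneNorm hC hh0, isConeLinear_coneNorm hC hh0,
    isStochLyap_coneNorm hbdd hC hCinv hγ0 hc hh hcontr⟩

end
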